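/- Let T be an almost steep rank-one transformation. Then T is doubly ergodic for levels: for every pair of levels A and B (of any columns of T) there exists a positive integer n with μ(A ∩ T^n A) > 0 and μ(B ∩ T^n A) > 0. -/

import Mathlib

open MeasureTheory Filter Set Pointwise

/-- A rank-one cutting-and-stacking transformation of a subset `X ⊆ ℝ` (with Lebesgue
measure), given by columns `C n` consisting of `h n` levels (open intervals) of width `w n`,
with `pos n j` the left endpoint of the level of height `j` in column `C n`; column `C (n+1)`
is obtained from `C n` by cutting into `r n ≥ 2` subcolumns of equal width, adding `s n k`
spacers above the `k`-th subcolumn, and stacking. -/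
structure RankOne where
  X : Set ℝ
  T : ℝ ≃ᵐ ℝ
  r : ℕ → ℕ
  s : ℕ → ℕ → ℕ
  h : ℕ → ℕ
  w : ℕ → ℝ
  pos : ℕ → ℕ → ℝ
  hr : ∀ n, 2 ≤ r n
  h0 : h 0 = 1
  w0 : w 0 = 1
  pos0 : pos 0 0 = 0
  hrec : ∀ n, h (n + 1) = ∑ k ∈ Finset.range (r n), (h n + s n k)
  wrec : ∀ n, w (n + 1) = w n / (r n : ℝ)
  hX : X = ⋃ n, ⋃ j < h n, Set.Ioo (pos n j) (pos n j + w n)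
  disj : ∀ n, ∀ j < h n, ∀ j' < h n, j ≠ j' →
    Disjoint (Set.Ioo (pos n j) (pos n j + w n)) (Set.Ioo (pos n j') (pos n j' + w n))
  stack : ∀ n, ∀ j < h n, ∀ k < r n,
    pos (n + 1) ((∑ i ∈ Finset.range k, (h n + s n i)) + j) = pos n j + (k : ℝ) * w (n + 1)
  Tmap : ∀ n j, j + 1 < h n → ∀ x ∈ Set.Ioo (pos n j) (pos n j + w n),
    T x = x + (pos n (j + 1) - pos n j)
  Tbij : Set.BijOn (⇑T) X X
  Tpres : MeasurePreserving (⇑T) (volume.restrict X) (volume.restrict X)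

namespace RankOne

/-- The level of height `j` in column `C n`. -/
def lvl (S : RankOne) (n j : ℕ) : Set ℝ := Set.Ioo (S.pos n j) (S.pos n j + S.w n)

/-- The measure on the space: Lebesgue measure restricted to `X`. -/
noncomputable def μ (S : RankOne) : Measure ℝ := volume.restrict S.X

/-- The intrinsic weight sequence `u n F = μ(F ∩ TⁿF) / μ(F)²`. -/
noncomputable def u (S : RankOne) (F : Set ℝ) (n : ℕ) : ℝ :=
  (S.μ (F ∩ (⇑S.T)^[n] '' F)).toReal / (S.μ F).toReal ^ 2

/-- `a n F = ∑_{k<n} u k F`. -/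
noncomputable def a (S : RankOne) (F : Set ℝ) (n : ℕ) : ℝ :=
  ∑ k ∈ Finset.range n, S.u F k

/-- `T` is normal if spacers are added above the rightmost subcolumn infinitely often. -/
def Normal (S : RankOne) : Prop := ∀ m, ∃ n, m ≤ n ∧ 0 < S.s n (S.r n - 1)

/-- `T` grows exponentially: `2 s_{n, r_n - 1} ≥ h_{n+1}` for every `n`. -/
def ExpGrowing (S : RankOne) : Prop := ∀ n, S.h (n + 1) ≤ 2 * S.s n (S.r n - 1)

/-- `T` has a bounded number of cuts: `sup r_n < ∞`. -/
def BoundedCuts (S : RankOne) : Prop := ∃ c, ∀ n, S.r n ≤ c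

/-- `H n = {0} ∪ {∑_{k≤i} (h n + s n k) : 0 ≤ i < r n - 1}`. -/
def Hset (S : RankOne) (n : ℕ) : Finset ℕ :=
  insert 0 ((Finset.range (S.r n - 1)).image fun i => ∑ k ∈ Finset.range (i + 1), (S.h n + S.s n k))

/-- The set of heights in column `C N` of the descendants of the level of height `p`
in column `C j`: `D(J, N) = p + H j ⊕ H (j+1) ⊕ ⋯ ⊕ H (N-1)`. -/
def desc (S : RankOne) (j p : ℕ) : ℕ → Finset ℕ
  | 0 => {p}
  | N + 1 => if N < j then {p} else desc S j p N + S.Hset N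

/-- `M m`: the maximal height of a descendant of the unit interval `I` in column `C m`. -/
def M (S : RankOne) (m : ℕ) : ℕ := (S.desc 0 0 m).sup id

/-- The ergodic sum `S_n(1_F)(x) = ∑_{k<n} 1_F(T^k x)`. -/
noncomputable def birkhoff (S : RankOne) (F : Set ℝ) (n : ℕ) (x : ℝ) : ℝ :=
  ∑ k ∈ Finset.range n, Set.indicator F (fun _ => (1 : ℝ)) ((⇑S.T)^[k] x)

/-- `T` is rationally weakly mixing on `F`. -/
def RWMOn (S : RankOne) (F : Set ℝ) : Prop :=
  MeasurableSet F ∧ 0 < S.μ F ∧ S.μ F ≠ ⊤ ∧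
  ∀ A B : Set ℝ, MeasurableSet A → A ⊆ F → MeasurableSet B → B ⊆ F →
    Tendsto (fun n => (S.a F n)⁻¹ *
      ∑ k ∈ Finset.range n,
        |(S.μ (A ∩ (⇑S.T)^[k] '' B)).toReal - (S.μ A).toReal * (S.μ B).toReal * S.u F k|)
      atTop (nhds 0)

/-- `T` is rationally weakly mixing. -/
def RWM (S : RankOne) : Prop := ∃ F, S.RWMOn F

/-- `T` is rationally ergodic: some set `F` of positive finite measure satisfies a
Renyi inequality. -/
def RatErgodic (S : RankOne) : Prop :=
  ∃ (F : Set ℝ) (c : ℝ), MeasurableSet F ∧ 0 < S.μ F ∧ S.μ F ≠ ⊤ ∧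
    ∀ n, ∫ x in F, (S.birkhoff F n x) ^ 2 ∂S.μ ≤ c * (∫ x in F, S.birkhoff F n x ∂S.μ) ^ 2

/-- `T` is spectrally weakly mixing: every bounded measurable eigenfunction is a.e. constant. -/
def SpecWM (S : RankOne) : Prop :=
  ∀ (f : ℝ → ℂ) (z : ℂ), Measurable f → (∃ C, ∀ᵐ x ∂S.μ, ‖f x‖ ≤ C) →
    (∀ᵐ x ∂S.μ, f (S.T x) = z * f x) → ∃ c : ℂ, ∀ᵐ x ∂S.μ, f x = c

/-- `T` is zero-type: `μ(A ∩ TⁿA) → 0` for all `A` of finite measure. -/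
def ZeroType (S : RankOne) : Prop :=
  ∀ A : Set ℝ, MeasurableSet A → S.μ A ≠ ⊤ →
    Tendsto (fun n => S.μ (A ∩ (⇑S.T)^[n] '' A)) atTop (nhds 0)

/-- The `i`-th nonzero element of `H n` (for `i < r n - 1`): `e n i = ∑_{k ≤ i} (h n + s n k)`. -/
def e (S : RankOne) (n i : ℕ) : ℕ := ∑ k ∈ Finset.range (i + 1), (S.h n + S.s n k)

/-- `T` is steep: listing the nonzero elements of `H 0`, then `H 1`, etc., as `t 1, t 2, …`,
each successive element is at least `4` times the previous one. -/
def Steep (S : RankOne) : Prop :=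
  (∀ n i, i + 2 < S.r n → 4 * S.e n i ≤ S.e n (i + 1)) ∧
  (∀ n, 4 * S.e n (S.r n - 2) ≤ S.e (n + 1) 0)

/-- `T` is almost steep. -/
def AlmostSteep (S : RankOne) : Prop :=
  ∀ n, 3 ≤ S.r n ∧ S.s n 0 = 0 ∧ S.s n 1 = 1 ∧
    ∀ i, 2 ≤ i → i ≤ S.r n - 1 →
      4 * (∑ k ∈ Finset.range i, (S.h n + S.s n k)) ≤ ∑ k ∈ Finset.range (i + 1), (S.h n + S.s n k)

/-- `A` is a finite union of levels of `T`. -/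
def FinUnionLevels (S : RankOne) (A : Set ℝ) : Prop :=
  ∃ q : Finset (ℕ × ℕ), (∀ v ∈ q, v.2 < S.h v.1) ∧ A = ⋃ v ∈ q, S.lvl v.1 v.2

end RankOne


namespace RankOne

theorem w_pos (S : RankOne) (n : ℕ) : 0 < S.w n := by
  induction n with
  | zero => rw [S.w0]; norm_num
  | succ n ih =>
    rw [S.wrec]
    have := S.hr n
    have h2 : (0 : ℝ) < S.r n := by exact_mod_cast (by omega : 0 < S.r n)
    positivity

/-- Sublevels: height bound and inclusion. -/
theorem sub_lvl (S : RankOne) (n j k : ℕ) (hj : j < S.h n) (hk : k < S.r n) :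
    (∑ i ∈ Finset.range k, (S.h n + S.s n i)) + j < S.h (n + 1) ∧
    S.lvl (n + 1) ((∑ i ∈ Finset.range k, (S.h n + S.s n i)) + j) ⊆ S.lvl n j := by
  constructor
  · rw [S.hrec]
    have h1 : ∑ i ∈ Finset.range (k + 1), (S.h n + S.s n i)
        ≤ ∑ i ∈ Finset.range (S.r n), (S.h n + S.s n i) :=
      Finset.sum_le_sum_of_subset (Finset.range_subset_range.2 hk)
    rw [Finset.sum_range_succ] at h1
    omega
  · unfold lvl
    rw [S.stack n j hj k hk]
    have hw := S.w_pos (n + 1)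
    have hr0 : (0 : ℝ) < S.r n := by exact_mod_cast (by omega : 0 < S.r n)
    have hwn : S.w n = S.r n * S.w (n + 1) := by rw [S.wrec]; field_simp
    have hk' : (k : ℝ) + 1 ≤ S.r n := by exact_mod_cast hk
    have hk0 : (0 : ℝ) ≤ k := Nat.cast_nonneg k
    apply Set.Ioo_subset_Ioo
    · nlinarith
    · rw [hwn]; nlinarith

/-- `J` at height `x` in `C n` lies inside `A`. -/
def InA (S : RankOne) (A : Set ℝ) (n x : ℕ) : Prop := x < S.h n ∧ S.lvl n x ⊆ A

theorem InA.step0 {S : RankOne} (hst : S.AlmostSteep) {A : Set ℝ} {n x : ℕ} (h : S.InA A n x) :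
    S.InA A (n + 1) x := by
  have h3 := (hst n).1
  have := S.sub_lvl n x 0 h.1 (by omega)
  simp only [Finset.range_zero, Finset.sum_empty, zero_add] at this
  exact ⟨this.1, this.2.trans h.2⟩

theorem InA.step1 {S : RankOne} (hst : S.AlmostSteep) {A : Set ℝ} {n x : ℕ} (h : S.InA A n x) :
    S.InA A (n + 1) (S.h n + x) := by
  obtain ⟨h3, h0, -⟩ := hst n
  have := S.sub_lvl n x 1 h.1 (by omega)
  simp only [Finset.sum_range_succ, Finset.range_zero, Finset.sum_empty, zero_add, h0,
    add_zero] at this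
  exact ⟨this.1, this.2.trans h.2⟩

theorem InA.step2 {S : RankOne} (hst : S.AlmostSteep) {A : Set ℝ} {n x : ℕ} (h : S.InA A n x) :
    S.InA A (n + 1) (S.h n + (S.h n + 1) + x) := by
  obtain ⟨h3, h0, h1, -⟩ := hst n
  have := S.sub_lvl n x 2 h.1 (by omega)
  simp only [Finset.sum_range_succ, Finset.range_zero, Finset.sum_empty, zero_add, h0, h1,
    add_zero] at this
  exact ⟨this.1, this.2.trans h.2⟩

theorem InA.steps {S : RankOne} (hst : S.AlmostSteep) {A : Set ℝ} {n x : ℕ} (h : S.InA A n x)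
    (m : ℕ) : S.InA A (n + m) x := by
  induction m with
  | zero => exact h
  | succ m ih => exact ih.step0 hst

theorem iter (S : RankOne) (n j m : ℕ) (h : j + m < S.h n) (x : ℝ) (hx : x ∈ S.lvl n j) :
    (⇑S.T)^[m] x = x + (S.pos n (j + m) - S.pos n j) := by
  induction m with
  | zero => simp
  | succ m ih =>
    rw [Function.iterate_succ_apply', ih (by omega), S.Tmap n (j + m) (by omega)]
    · rw [← add_assoc]; ring
    · unfold lvl at hx
      constructor <;> linarith [hx.1, hx.2]

theorem pos_meas {S : RankOne} {A B : Set ℝ} {N d n : ℕ} (hA : S.InA A N d)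
    (hB : S.InA B N (d + n)) : 0 < S.μ (B ∩ (⇑S.T)^[n] '' A) := by
  have hsub : S.lvl N (d + n) ⊆ B ∩ (⇑S.T)^[n] '' A := by
    intro y hy
    refine ⟨hB.2 hy, y - (S.pos N (d + n) - S.pos N d), ?_⟩
    have hx : y - (S.pos N (d + n) - S.pos N d) ∈ S.lvl N d := by
      unfold lvl at hy ⊢
      constructor <;> linarith [hy.1, hy.2]
    refine ⟨hA.2 hx, ?_⟩
    rw [S.iter N d n hB.1 _ hx]; ring
  refine lt_of_lt_of_le ?_ (measure_mono hsub)
  have hX : S.lvl N (d + n) ⊆ S.X := by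
    rw [S.hX]
    intro y hy
    simp only [Set.mem_iUnion]
    exact ⟨N, d + n, hB.1, hy⟩
  unfold μ
  rw [Measure.restrict_eq_self _ hX]
  unfold lvl
  rw [Real.volume_Ioo]
  simp [S.w_pos N]

theorem key {S : RankOne} (hst : S.AlmostSteep) {A B : Set ℝ} (k : ℕ) :
    ∀ N x x' v z : ℕ, S.InA A N x → S.InA A N x' → S.InA A N v → S.InA B N z →
      ((x' : ℤ) + v - x - z).natAbs = k →
      ∃ M d e n, 0 < n ∧ S.InA A M d ∧ S.InA A M (d + n) ∧ S.InA A M e ∧ S.InA B M (e + n) := by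
  induction k with
  | zero =>
    intro N x x' v z hx hx' hv hz hk
    have := hx.1
    refine ⟨N + 1, x, v, S.h N + x' - x, by omega, hx.step0 hst, ?_, hv.step0 hst, ?_⟩
    · convert hx'.step1 hst using 1; omega
    · convert hz.step1 hst using 1; omega
  | succ k ih =>
    intro N x x' v z hx hx' hv hz hk
    rcases lt_or_ge 0 ((x' : ℤ) + v - x - z) with h | h
    · exact ih (N + 1) _ _ _ _ (hx.step0 hst) (hx'.step1 hst) (hv.step1 hst) (hz.step2 hst)
        (by push_cast; omega)
    · exact ih (N + 1) _ _ _ _ (hx.step1 hst) (hx'.step2 hst) (hv.step0 hst) (hz.step1 hst)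
        (by push_cast; omega)

end RankOne

/-- An almost steep rank-one transformation is doubly ergodic for levels:
for any levels `A` (of height `p` in `C j`) and `B` (of height `p'` in `C j'`) there is a
positive integer `n` with `μ(A ∩ TⁿA) > 0` and `μ(B ∩ TⁿA) > 0`. -/
theorem statement15 (S : RankOne) (hst : S.AlmostSteep)
    (j p : ℕ) (hp : p < S.h j) (j' p' : ℕ) (hp' : p' < S.h j') :
    ∃ n : ℕ, 0 < n ∧ 0 < S.μ (S.lvl j p ∩ (⇑S.T)^[n] '' S.lvl j p) ∧
      0 < S.μ (S.lvl j' p' ∩ (⇑S.T)^[n] '' S.lvl j p) := by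
  have hA : S.InA (S.lvl j p) (j + j') p := RankOne.InA.steps hst ⟨hp, subset_rfl⟩ j'
  have hB : S.InA (S.lvl j' p') (j + j') p' := by
    rw [add_comm]; exact RankOne.InA.steps hst ⟨hp', subset_rfl⟩ j
  obtain ⟨M, d, e, n, hn, h1, h2, h3, h4⟩ := RankOne.key hst _ _ p p p p' hA hA hA hB rfl
  exact ⟨n, hn, RankOne.pos_meas h1 h2, RankOne.pos_meas h3 h4⟩
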